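/- The logic iM, the intuitionistic monotone modal logic axiomatized over IPC by □(φ∧ψ)→□φ∧□ψ and the monotonicity rule (from φ→ψ and ψ→φ infer □φ→□ψ), has the uniform Lyndon interpolation property: for every formula φ, atom p, and polarity ∘∈{+,−}, there exist p∘-free formulas ∃∘p φ and ∀∘p φ with V†(∃∘p φ)⊆V†(φ) and V†(∀∘p φ)⊆V†(φ) for †∈{+,−}, such that iM⊢φ→∃∘p φ; for every p∘-free ψ with iM⊢φ→ψ we have iM⊢∃∘p φ→ψ; iM⊢∀∘p φ→φ; and for every p∘-free ψ with iM⊢ψ→φ we have iM⊢ψ→∀∘p φ. -/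

import Mathlib

/-- Formulas of intuitionistic (monotone) modal logic over atoms `ℕ`,
with conjunction, disjunction, implication, falsum and a box modality. -/
inductive Fm : Type where
  | atom : ℕ → Fm
  | bot  : Fm
  | and  : Fm → Fm → Fm
  | or   : Fm → Fm → Fm
  | imp  : Fm → Fm → Fm
  | box  : Fm → Fm
deriving DecidableEq

/-- `⊤` as the abbreviation `⊥ → ⊥`. -/
def Fm.top : Fm := Fm.imp Fm.bot Fm.bot
/-- Polarity-indexed variable sets: `Vb true φ = V⁺(φ)` and `Vb false φ = V⁻(φ)`. -/
def Vb : Bool → Fm → Finset ℕ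
  | b, .atom q => if b then {q} else ∅
  | _, .bot => ∅
  | b, .and φ ψ => Vb b φ ∪ Vb b ψ
  | b, .or φ ψ => Vb b φ ∪ Vb b ψ
  | b, .imp φ ψ => Vb (!b) φ ∪ Vb b ψ
  | b, .box φ => Vb b φ
/-- The sequent calculus `G3iM^w` for intuitionistic monotone modal logic:
single-conclusion sequents with a multiset antecedent. -/
inductive G3 : Multiset Fm → Fm → Prop
  | ax (Γ : Multiset Fm) (p : ℕ) : G3 (Fm.atom p ::ₘ Γ) (Fm.atom p)
  | lbot (Γ : Multiset Fm) (φ : Fm) : G3 (Fm.bot ::ₘ Γ) φ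
  | land (Γ : Multiset Fm) (φ ψ θ : Fm) :
      G3 (φ ::ₘ ψ ::ₘ Γ) θ → G3 (φ.and ψ ::ₘ Γ) θ
  | rand (Γ : Multiset Fm) (φ ψ : Fm) : G3 Γ φ → G3 Γ ψ → G3 Γ (φ.and ψ)
  | lor (Γ : Multiset Fm) (φ ψ θ : Fm) :
      G3 (φ ::ₘ Γ) θ → G3 (ψ ::ₘ Γ) θ → G3 (φ.or ψ ::ₘ Γ) θ
  | ror₁ (Γ : Multiset Fm) (φ ψ : Fm) : G3 Γ φ → G3 Γ (φ.or ψ)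
  | ror₂ (Γ : Multiset Fm) (φ ψ : Fm) : G3 Γ ψ → G3 Γ (φ.or ψ)
  | limp (Γ : Multiset Fm) (φ ψ θ : Fm) :
      G3 (φ.imp ψ ::ₘ Γ) φ → G3 (ψ ::ₘ Γ) θ → G3 (φ.imp ψ ::ₘ Γ) θ
  | rimp (Γ : Multiset Fm) (φ ψ : Fm) : G3 (φ ::ₘ Γ) ψ → G3 Γ (φ.imp ψ)
  | m (Γ : Multiset Fm) (φ ψ : Fm) : G3 {φ} ψ → G3 (φ.box ::ₘ Γ) (ψ.box)

/-- The intuitionistic monotone modal logic `iM`: `φ` is a theorem iff the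
sequent `⇒ φ` is derivable in `G3iM^w`. -/
def iM (φ : Fm) : Prop := G3 0 φ

/-! ### Structural rules for `G3` -/

theorem G3.cast {M N : Multiset Fm} {θ : Fm} (h : G3 M θ) (e : M = N) : G3 N θ := e ▸ h

theorem G3.weak {M : Multiset Fm} {θ : Fm} (h : G3 M θ) : ∀ N, G3 (M + N) θ := by
  induction h with
  | ax Γ p => intro N; rw [Multiset.cons_add]; exact .ax _ _
  | lbot Γ φ => intro N; rw [Multiset.cons_add]; exact .lbot _ _
  | land Γ φ ψ θ _ ih =>
    intro N; rw [Multiset.cons_add]; apply G3.land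
    simpa only [Multiset.cons_add] using ih N
  | rand Γ φ ψ _ _ ih1 ih2 => intro N; exact .rand _ _ _ (ih1 N) (ih2 N)
  | lor Γ φ ψ θ _ _ ih1 ih2 =>
    intro N; rw [Multiset.cons_add]; apply G3.lor
    · simpa only [Multiset.cons_add] using ih1 N
    · simpa only [Multiset.cons_add] using ih2 N
  | ror₁ Γ φ ψ _ ih => intro N; exact .ror₁ _ _ _ (ih N)
  | ror₂ Γ φ ψ _ ih => intro N; exact .ror₂ _ _ _ (ih N)
  | limp Γ φ ψ θ _ _ ih1 ih2 =>
    intro N; rw [Multiset.cons_add]; apply G3.limp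
    · simpa only [Multiset.cons_add] using ih1 N
    · simpa only [Multiset.cons_add] using ih2 N
  | rimp Γ φ ψ _ ih =>
    intro N; apply G3.rimp
    simpa only [Multiset.cons_add] using ih N
  | m Γ φ ψ h _ => intro N; rw [Multiset.cons_add]; exact .m _ _ _ h

/-- Generic inversion: replace a compound left formula `x` by the multiset `N`. -/
theorem G3.inv {x : Fm} {N : Multiset Fm}
    (hat : ∀ q, x ≠ .atom q) (hbot : x ≠ .bot) (hbox : ∀ a, x ≠ .box a)
    (hand : ∀ c d Γ θ, x = .and c d → G3 (c ::ₘ d ::ₘ Γ) θ → G3 (N + Γ) θ)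
    (hor : ∀ c d Γ θ, x = .or c d → G3 (c ::ₘ Γ) θ → G3 (d ::ₘ Γ) θ → G3 (N + Γ) θ)
    (himp : ∀ c d Γ θ, x = .imp c d → G3 (d ::ₘ Γ) θ → G3 (N + Γ) θ)
    {M : Multiset Fm} {θ : Fm} (h : G3 M θ) : ∀ Γ, M = x ::ₘ Γ → G3 (N + Γ) θ := by
  induction h with
  | ax Γ p =>
    intro Δ e
    rcases Multiset.cons_eq_cons.1 e with ⟨e1, _⟩ | ⟨_, C, rfl, rfl⟩
    · exact absurd e1.symm (hat _)
    · rw [Multiset.add_cons]; exact .ax _ _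
  | lbot Γ φ =>
    intro Δ e
    rcases Multiset.cons_eq_cons.1 e with ⟨e1, _⟩ | ⟨_, C, rfl, rfl⟩
    · exact absurd e1.symm hbot
    · rw [Multiset.add_cons]; exact .lbot _ _
  | land Γ φ ψ θ h ih =>
    intro Δ e
    rcases Multiset.cons_eq_cons.1 e with ⟨e1, rfl⟩ | ⟨_, C, rfl, rfl⟩
    · exact hand _ _ _ _ e1.symm h
    · rw [Multiset.add_cons]; apply G3.land
      refine (ih (φ ::ₘ ψ ::ₘ C) ?_).cast ?_
      · rw [Multiset.cons_swap ψ, Multiset.cons_swap φ]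
      · simp only [Multiset.add_cons]
  | rand Γ φ ψ _ _ ih1 ih2 => intro N e; exact .rand _ _ _ (ih1 N e) (ih2 N e)
  | lor Γ φ ψ θ h1 h2 ih1 ih2 =>
    intro Δ e
    rcases Multiset.cons_eq_cons.1 e with ⟨e1, rfl⟩ | ⟨_, C, rfl, rfl⟩
    · exact hor _ _ _ _ e1.symm h1 h2
    · rw [Multiset.add_cons]; apply G3.lor
      · exact (ih1 (φ ::ₘ C) (Multiset.cons_swap _ _ _)).cast (by simp only [Multiset.add_cons])
      · exact (ih2 (ψ ::ₘ C) (Multiset.cons_swap _ _ _)).cast (by simp only [Multiset.add_cons])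
  | ror₁ Γ φ ψ _ ih => intro N e; exact .ror₁ _ _ _ (ih N e)
  | ror₂ Γ φ ψ _ ih => intro N e; exact .ror₂ _ _ _ (ih N e)
  | limp Γ φ ψ θ h1 h2 ih1 ih2 =>
    intro Δ e
    rcases Multiset.cons_eq_cons.1 e with ⟨e1, rfl⟩ | ⟨_, C, rfl, rfl⟩
    · exact himp _ _ _ _ e1.symm h2
    · rw [Multiset.add_cons]; apply G3.limp
      · exact (ih1 (φ.imp ψ ::ₘ C) (Multiset.cons_swap _ _ _)).cast
          (by simp only [Multiset.add_cons])
      · exact (ih2 (ψ ::ₘ C) (Multiset.cons_swap _ _ _)).cast (by simp only [Multiset.add_cons])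
  | rimp Γ φ ψ _ ih =>
    intro Δ e; apply G3.rimp; subst e
    exact (ih (φ ::ₘ Δ) (Multiset.cons_swap _ _ _)).cast (by simp only [Multiset.add_cons])
  | m Γ φ ψ h _ =>
    intro Δ e
    rcases Multiset.cons_eq_cons.1 e with ⟨e1, _⟩ | ⟨_, C, rfl, rfl⟩
    · exact absurd e1.symm (hbox _)
    · rw [Multiset.add_cons]; exact .m _ _ _ h

theorem G3.inv_and {a b θ : Fm} {Γ : Multiset Fm} (h : G3 (a.and b ::ₘ Γ) θ) :
    G3 (a ::ₘ b ::ₘ Γ) θ := by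
  have := G3.inv (x := a.and b) (N := a ::ₘ b ::ₘ 0) (by simp) (by simp) (by simp)
    (by rintro c d Γ θ e h; cases e; simpa using h) (by simp) (by simp) h Γ rfl
  simpa using this

theorem G3.inv_or {a b θ : Fm} {Γ : Multiset Fm} (h : G3 (a.or b ::ₘ Γ) θ) :
    G3 (a ::ₘ Γ) θ ∧ G3 (b ::ₘ Γ) θ := by
  have h1 := G3.inv (x := a.or b) (N := a ::ₘ 0) (by simp) (by simp) (by simp) (by simp)
    (by rintro c d Γ θ e h _; cases e; simpa using h) (by simp) h Γ rfl
  have h2 := G3.inv (x := a.or b) (N := b ::ₘ 0) (by simp) (by simp) (by simp) (by simp)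
    (by rintro c d Γ θ e _ h; cases e; simpa using h) (by simp) h Γ rfl
  exact ⟨by simpa using h1, by simpa using h2⟩

theorem G3.inv_imp {a b θ : Fm} {Γ : Multiset Fm} (h : G3 (a.imp b ::ₘ Γ) θ) :
    G3 (b ::ₘ Γ) θ := by
  have h1 := G3.inv (x := a.imp b) (N := b ::ₘ 0) (by simp) (by simp) (by simp) (by simp)
    (by simp) (by rintro c d Γ θ e h; cases e; simpa using h) h Γ rfl
  simpa using h1

/-- Principal-formula bookkeeping for contraction. -/
theorem cons_cons_split {x y : Fm} {Γ Δ : Multiset Fm} (e : y ::ₘ Γ = x ::ₘ x ::ₘ Δ) :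
    (y = x ∧ Γ = x ::ₘ Δ) ∨ ∃ C, Γ = x ::ₘ x ::ₘ C ∧ Δ = y ::ₘ C := by
  rcases Multiset.cons_eq_cons.1 e with h | ⟨hne, C, rfl, e2⟩
  · exact Or.inl h
  · right
    rcases Multiset.cons_eq_cons.1 e2 with ⟨e1, _⟩ | ⟨_, D, rfl, rfl⟩
    · exact absurd e1.symm hne
    · exact ⟨D, rfl, rfl⟩

theorem G3.contr_step (x : Fm)
    (hand : ∀ a b Γ θ, x = .and a b → G3 (a ::ₘ b ::ₘ a ::ₘ b ::ₘ Γ) θ → G3 (a ::ₘ b ::ₘ Γ) θ)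
    (hor : ∀ a b, x = .or a b → (∀ Γ θ, G3 (a ::ₘ a ::ₘ Γ) θ → G3 (a ::ₘ Γ) θ) ∧
      (∀ Γ θ, G3 (b ::ₘ b ::ₘ Γ) θ → G3 (b ::ₘ Γ) θ))
    (himp : ∀ a b Γ θ, x = .imp a b → G3 (b ::ₘ b ::ₘ Γ) θ → G3 (b ::ₘ Γ) θ)
    {M : Multiset Fm} {θ : Fm} (h : G3 M θ) :
    ∀ Γ, M = x ::ₘ x ::ₘ Γ → G3 (x ::ₘ Γ) θ := by
  induction h with
  | ax Γ p =>
    intro Δ e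
    rcases cons_cons_split e with ⟨rfl, _⟩ | ⟨C, rfl, rfl⟩
    · exact .ax _ _
    · rw [Multiset.cons_swap]; exact .ax _ _
  | lbot Γ φ =>
    intro Δ e
    rcases cons_cons_split e with ⟨rfl, _⟩ | ⟨C, rfl, rfl⟩
    · exact .lbot _ _
    · rw [Multiset.cons_swap]; exact .lbot _ _
  | land Γ φ ψ θ h ih =>
    intro Δ e
    rcases cons_cons_split e with ⟨rfl, rfl⟩ | ⟨C, rfl, rfl⟩
    · apply G3.land
      apply hand _ _ _ _ rfl
      have h' : G3 (φ.and ψ ::ₘ φ ::ₘ ψ ::ₘ Δ) θ := h.cast (by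
        rw [Multiset.cons_swap ψ, Multiset.cons_swap φ])
      exact h'.inv_and
    · rw [Multiset.cons_swap]; apply G3.land
      refine (ih (φ ::ₘ ψ ::ₘ C) ?_).cast ?_
      · simp only [← Multiset.singleton_add]; abel
      · simp only [← Multiset.singleton_add]; abel
  | rand Γ φ ψ _ _ ih1 ih2 => intro N e; exact .rand _ _ _ (ih1 N e) (ih2 N e)
  | lor Γ φ ψ θ h1 h2 ih1 ih2 =>
    intro Δ e
    rcases cons_cons_split e with ⟨rfl, rfl⟩ | ⟨C, rfl, rfl⟩
    · obtain ⟨c1, c2⟩ := hor _ _ rfl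
      rw [Multiset.cons_swap] at h1 h2
      exact .lor _ _ _ _ (c1 _ _ h1.inv_or.1) (c2 _ _ h2.inv_or.2)
    · rw [Multiset.cons_swap]; apply G3.lor
      · refine (ih1 (φ ::ₘ C) ?_).cast (Multiset.cons_swap _ _ _)
        simp only [← Multiset.singleton_add]; abel
      · refine (ih2 (ψ ::ₘ C) ?_).cast (Multiset.cons_swap _ _ _)
        simp only [← Multiset.singleton_add]; abel
  | ror₁ Γ φ ψ _ ih => intro N e; exact .ror₁ _ _ _ (ih N e)
  | ror₂ Γ φ ψ _ ih => intro N e; exact .ror₂ _ _ _ (ih N e)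
  | limp Γ φ ψ θ h1 h2 ih1 ih2 =>
    intro Δ e
    rcases cons_cons_split e with ⟨rfl, rfl⟩ | ⟨C, rfl, rfl⟩
    · rw [Multiset.cons_swap] at h2
      exact .limp _ _ _ _ (ih1 _ rfl) (himp _ _ _ _ rfl h2.inv_imp)
    · rw [Multiset.cons_swap]; apply G3.limp
      · refine (ih1 (φ.imp ψ ::ₘ C) ?_).cast (Multiset.cons_swap _ _ _)
        simp only [← Multiset.singleton_add]; abel
      · refine (ih2 (ψ ::ₘ C) ?_).cast (Multiset.cons_swap _ _ _)
        simp only [← Multiset.singleton_add]; abel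
  | rimp Γ φ ψ _ ih =>
    intro Δ e; apply G3.rimp; subst e
    refine (ih (φ ::ₘ Δ) ?_).cast (Multiset.cons_swap _ _ _)
    simp only [← Multiset.singleton_add]; abel
  | m Γ φ ψ h _ =>
    intro Δ e
    rcases cons_cons_split e with ⟨rfl, _⟩ | ⟨C, rfl, rfl⟩
    · exact .m _ _ _ h
    · rw [Multiset.cons_swap]; exact .m _ _ _ h

theorem G3.contr (x : Fm) : ∀ (Γ : Multiset Fm) (θ : Fm), G3 (x ::ₘ x ::ₘ Γ) θ → G3 (x ::ₘ Γ) θ := by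
  induction x with
  | atom q => intro Γ θ h; exact G3.contr_step _ (by simp) (by simp) (by simp) h _ rfl
  | bot => intro Γ θ h; exact G3.contr_step _ (by simp) (by simp) (by simp) h _ rfl
  | box a _ => intro Γ θ h; exact G3.contr_step _ (by simp) (by simp) (by simp) h _ rfl
  | and a b iha ihb =>
    intro Γ θ h
    refine G3.contr_step _ ?_ (by simp) (by simp) h _ rfl
    intro c d Γ θ e h
    cases e
    have h1 : G3 (a ::ₘ a ::ₘ (b ::ₘ b ::ₘ Γ)) θ := h.cast (by
      simp only [← Multiset.singleton_add]; abel)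
    have h2 : G3 (b ::ₘ b ::ₘ (a ::ₘ Γ)) θ := (iha _ _ h1).cast (by
      simp only [← Multiset.singleton_add]; abel)
    exact (ihb _ _ h2).cast (Multiset.cons_swap _ _ _)
  | or a b iha ihb =>
    intro Γ θ h
    refine G3.contr_step _ (by simp) ?_ (by simp) h _ rfl
    intro c d e
    cases e
    exact ⟨iha, ihb⟩
  | imp a b _ ihb =>
    intro Γ θ h
    refine G3.contr_step _ (by simp) (by simp) ?_ h _ rfl
    intro c d Γ θ e
    cases e
    exact ihb _ _

/-! ### Set-based calculus -/

inductive D : Set Fm → Fm → Prop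
  | ax (S : Set Fm) (q : ℕ) : Fm.atom q ∈ S → D S (.atom q)
  | lbot (S : Set Fm) (θ : Fm) : Fm.bot ∈ S → D S θ
  | land (S : Set Fm) (a b θ : Fm) : a.and b ∈ S → D (insert a (insert b S)) θ → D S θ
  | rand (S : Set Fm) (a b : Fm) : D S a → D S b → D S (a.and b)
  | lor (S : Set Fm) (a b θ : Fm) : a.or b ∈ S → D (insert a S) θ → D (insert b S) θ → D S θ
  | ror₁ (S : Set Fm) (a b : Fm) : D S a → D S (a.or b)
  | ror₂ (S : Set Fm) (a b : Fm) : D S b → D S (a.or b)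
  | limp (S : Set Fm) (a b θ : Fm) : a.imp b ∈ S → D S a → D (insert b S) θ → D S θ
  | rimp (S : Set Fm) (a b : Fm) : D (insert a S) b → D S (a.imp b)
  | m (S : Set Fm) (a b : Fm) : a.box ∈ S → D {a} b → D S b.box

theorem D.mono {S : Set Fm} {θ : Fm} (h : D S θ) : ∀ {T : Set Fm}, S ⊆ T → D T θ := by
  induction h with
  | ax S q h => intro T hs; exact .ax _ _ (hs h)
  | lbot S θ h => intro T hs; exact .lbot _ _ (hs h)
  | land S a b θ h _ ih =>
    intro T hs
    exact .land _ _ _ _ (hs h) (ih (Set.insert_subset_insert (Set.insert_subset_insert hs)))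
  | rand S a b _ _ ih1 ih2 => intro T hs; exact .rand _ _ _ (ih1 hs) (ih2 hs)
  | lor S a b θ h _ _ ih1 ih2 =>
    intro T hs
    exact .lor _ _ _ _ (hs h) (ih1 (Set.insert_subset_insert hs)) (ih2 (Set.insert_subset_insert hs))
  | ror₁ S a b _ ih => intro T hs; exact .ror₁ _ _ _ (ih hs)
  | ror₂ S a b _ ih => intro T hs; exact .ror₂ _ _ _ (ih hs)
  | limp S a b θ h _ _ ih1 ih2 =>
    intro T hs
    exact .limp _ _ _ _ (hs h) (ih1 hs) (ih2 (Set.insert_subset_insert hs))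
  | rimp S a b _ ih => intro T hs; exact .rimp _ _ _ (ih (Set.insert_subset_insert hs))
  | m S a b h h2 _ => intro T hs; exact .m _ _ _ (hs h) h2

/-- The underlying set of a multiset. -/
def ms (Γ : Multiset Fm) : Set Fm := {x | x ∈ Γ}

theorem mem_ms {Γ : Multiset Fm} {x : Fm} : x ∈ ms Γ ↔ x ∈ Γ := Iff.rfl

theorem ms_cons (x : Fm) (Γ : Multiset Fm) : ms (x ::ₘ Γ) = insert x (ms Γ) := by
  ext y; simp [ms]

theorem ms_zero : ms 0 = ∅ := by ext y; simp [ms]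

theorem G3.toD {M : Multiset Fm} {θ : Fm} (h : G3 M θ) : D (ms M) θ := by
  induction h with
  | ax Γ p => exact .ax _ _ (by simp [ms])
  | lbot Γ φ => exact .lbot _ _ (by simp [ms])
  | land Γ φ ψ θ _ ih =>
    refine .land _ φ ψ _ (by simp [ms]) (ih.mono ?_)
    simp only [ms_cons]; intro x; simp ; tauto
  | rand Γ φ ψ _ _ ih1 ih2 => exact .rand _ _ _ ih1 ih2
  | lor Γ φ ψ θ _ _ ih1 ih2 =>
    refine .lor _ φ ψ _ (by simp [ms]) (ih1.mono ?_) (ih2.mono ?_) <;>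
    · simp only [ms_cons]; intro x; simp ; tauto
  | ror₁ Γ φ ψ _ ih => exact .ror₁ _ _ _ ih
  | ror₂ Γ φ ψ _ ih => exact .ror₂ _ _ _ ih
  | limp Γ φ ψ θ _ _ ih1 ih2 =>
    refine .limp _ φ ψ _ (by simp [ms]) ih1 (ih2.mono ?_)
    simp only [ms_cons]; intro x; simp ; tauto
  | rimp Γ φ ψ _ ih => exact .rimp _ _ _ (by rwa [ms_cons] at ih)
  | m Γ φ ψ h ih => exact .m _ φ _ (by simp [ms]) (ih.mono (by intro x; simp [ms]))

theorem D.toG3 {S : Set Fm} {θ : Fm} (h : D S θ) : ∀ M : Multiset Fm, S ⊆ ms M → G3 M θ := by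
  induction h with
  | ax S q h =>
    intro M hs
    obtain ⟨N, rfl⟩ := Multiset.exists_cons_of_mem (hs h)
    exact .ax _ _
  | lbot S θ h =>
    intro M hs
    obtain ⟨N, rfl⟩ := Multiset.exists_cons_of_mem (hs h)
    exact .lbot _ _
  | land S a b θ h _ ih =>
    intro M hs
    have h1 := ih (a ::ₘ b ::ₘ M) (by
      simp only [ms_cons]; exact Set.insert_subset_insert (Set.insert_subset_insert hs))
    obtain ⟨N, rfl⟩ := Multiset.exists_cons_of_mem (hs h)
    apply G3.contr
    apply G3.land
    exact h1
  | rand S a b _ _ ih1 ih2 => intro M hs; exact .rand _ _ _ (ih1 M hs) (ih2 M hs)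
  | lor S a b θ h _ _ ih1 ih2 =>
    intro M hs
    have h1 := ih1 (a ::ₘ M) (by simp only [ms_cons]; exact Set.insert_subset_insert hs)
    have h2 := ih2 (b ::ₘ M) (by simp only [ms_cons]; exact Set.insert_subset_insert hs)
    obtain ⟨N, rfl⟩ := Multiset.exists_cons_of_mem (hs h)
    apply G3.contr
    exact G3.lor _ _ _ _ h1 h2
  | ror₁ S a b _ ih => intro M hs; exact .ror₁ _ _ _ (ih M hs)
  | ror₂ S a b _ ih => intro M hs; exact .ror₂ _ _ _ (ih M hs)
  | limp S a b θ h _ _ ih1 ih2 =>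
    intro M hs
    have h1 := ih1 M hs
    have h2 := ih2 (b ::ₘ M) (by simp only [ms_cons]; exact Set.insert_subset_insert hs)
    obtain ⟨N, rfl⟩ := Multiset.exists_cons_of_mem (hs h)
    apply G3.contr
    refine G3.limp _ _ _ _ ((h1.weak {a.imp b}).cast ?_) h2
    simp only [← Multiset.singleton_add]; abel
  | rimp S a b _ ih =>
    intro M hs
    exact .rimp _ _ _ (ih _ (by simp only [ms_cons]; exact Set.insert_subset_insert hs))
  | m S a b h _ ih =>
    intro M hs
    obtain ⟨N, rfl⟩ := Multiset.exists_cons_of_mem (hs h)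
    exact .m _ _ _ (ih _ (by intro x; simp [ms]))

/-! ### Cut admissibility by a semantic argument -/

inductive Cov (P : Set Fm → Prop) : Set Fm → Prop
  | ret (S : Set Fm) : P S → Cov P S
  | bot (S : Set Fm) : Fm.bot ∈ S → Cov P S
  | land (S : Set Fm) (a b : Fm) : a.and b ∈ S → Cov P (insert a (insert b S)) → Cov P S
  | lor (S : Set Fm) (a b : Fm) : a.or b ∈ S → Cov P (insert a S) → Cov P (insert b S) → Cov P S
  | limp (S : Set Fm) (a b : Fm) : a.imp b ∈ S → D S a → Cov P (insert b S) → Cov P S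

theorem Cov.map {P Q : Set Fm → Prop} {S : Set Fm} (h : Cov P S) :
    ∀ {T : Set Fm}, S ⊆ T → (∀ U V, U ⊆ V → T ⊆ V → P U → Q V) → Cov Q T := by
  induction h with
  | ret S h => intro T hs hq; exact .ret _ (hq _ _ hs subset_rfl h)
  | bot S h => intro T hs hq; exact .bot _ (hs h)
  | land S a b h _ ih =>
    intro T hs hq
    exact .land _ _ _ (hs h) (ih (Set.insert_subset_insert (Set.insert_subset_insert hs))
      (fun U V h1 h2 => hq U V h1 (fun x hx => h2 (by simp [hx]))))
  | lor S a b h _ _ ih1 ih2 =>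
    intro T hs hq
    exact .lor _ _ _ (hs h)
      (ih1 (Set.insert_subset_insert hs) (fun U V h1 h2 => hq U V h1 (fun x hx => h2 (by simp [hx]))))
      (ih2 (Set.insert_subset_insert hs) (fun U V h1 h2 => hq U V h1 (fun x hx => h2 (by simp [hx]))))
  | limp S a b h h1 _ ih =>
    intro T hs hq
    exact .limp _ _ _ (hs h) (h1.mono hs)
      (ih (Set.insert_subset_insert hs) (fun U V h1 h2 => hq U V h1 (fun x hx => h2 (by simp [hx]))))

theorem Cov.join {P : Set Fm → Prop} {S : Set Fm} (h : Cov (Cov P) S) : Cov P S := by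
  induction h with
  | ret S h => exact h
  | bot S h => exact .bot _ h
  | land S a b h _ ih => exact .land _ _ _ h ih
  | lor S a b h _ _ ih1 ih2 => exact .lor _ _ _ h ih1 ih2
  | limp S a b h h1 _ ih => exact .limp _ _ _ h h1 ih

theorem Cov.run {θ : Fm} {S : Set Fm} (h : Cov (fun T => D T θ) S) : D S θ := by
  induction h with
  | ret S h => exact h
  | bot S h => exact .lbot _ _ h
  | land S a b h _ ih => exact .land _ _ _ _ h ih
  | lor S a b h _ _ ih1 ih2 => exact .lor _ _ _ _ h ih1 ih2
  | limp S a b h h1 _ ih => exact .limp _ _ _ _ h h1 ih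

def force : Fm → Set Fm → Prop
  | .atom q, S => D S (.atom q)
  | .bot, S => D S .bot
  | .and a b, S => force a S ∧ force b S
  | .or a b, S => Cov (fun T => force a T ∨ force b T) S
  | .imp a b, S => ∀ T, S ⊆ T → force a T → force b T
  | .box a, S => Cov (fun T => ∃ d : Fm, d.box ∈ T ∧ force a {d}) S

theorem force.mono (a : Fm) : ∀ {S T : Set Fm}, S ⊆ T → force a S → force a T := by
  induction a with
  | atom q => intro S T hs h; exact D.mono h hs
  | bot => intro S T hs h; exact D.mono h hs
  | and a b iha ihb => intro S T hs h; exact ⟨iha hs h.1, ihb hs h.2⟩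
  | or a b iha ihb =>
    intro S T hs h
    exact Cov.map h hs (fun U V h1 _ => Or.imp (iha h1) (ihb h1))
  | imp a b _ _ => intro S T hs h U hu; exact h U (hs.trans hu)
  | box a _ =>
    intro S T hs h
    exact Cov.map h hs (fun U V h1 _ ⟨d, hd, hf⟩ => ⟨d, h1 hd, hf⟩)

theorem force.paste (a : Fm) : ∀ {S : Set Fm}, Cov (force a) S → force a S := by
  induction a with
  | atom q => intro S h; exact Cov.run h
  | bot => intro S h; exact Cov.run h
  | and a b iha ihb =>
    intro S h
    exact ⟨iha (h.map subset_rfl (fun U V h1 _ hf => force.mono a h1 hf.1)),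
      ihb (h.map subset_rfl (fun U V h1 _ hf => force.mono b h1 hf.2))⟩
  | or a b iha ihb => intro S h; exact Cov.join h
  | imp a b _ ihb =>
    intro S h T hs ha
    exact ihb (h.map hs (fun U V h1 h2 hf => hf V h1 (force.mono a h2 ha)))
  | box a _ => intro S h; exact Cov.join h

theorem force.reify_reflect (a : Fm) :
    (∀ S, force a S → D S a) ∧ (∀ S, a ∈ S → force a S) := by
  induction a with
  | atom q => exact ⟨fun S h => h, fun S h => .ax _ _ h⟩
  | bot => exact ⟨fun S h => h, fun S h => .lbot _ _ h⟩
  | and a b iha ihb =>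
    refine ⟨fun S h => .rand _ _ _ (iha.1 _ h.1) (ihb.1 _ h.2), fun S h => ?_⟩
    apply force.paste
    exact .land _ _ _ h (.ret _ ⟨iha.2 _ (by simp), ihb.2 _ (by simp)⟩)
  | or a b iha ihb =>
    refine ⟨fun S h => ?_, fun S h => ?_⟩
    · refine Cov.run (Cov.map h subset_rfl (fun U V h1 _ hf => ?_))
      rcases hf with hf | hf
      · exact .ror₁ _ _ _ ((iha.1 _ hf).mono h1)
      · exact .ror₂ _ _ _ ((ihb.1 _ hf).mono h1)
    · exact .lor _ _ _ h (.ret _ (Or.inl (iha.2 _ (by simp)))) (.ret _ (Or.inr (ihb.2 _ (by simp))))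
  | imp a b iha ihb =>
    refine ⟨fun S h => ?_, fun S h T hs ha => ?_⟩
    · exact .rimp _ _ _ (ihb.1 _ (h _ (Set.subset_insert _ _) (iha.2 _ (by simp))))
    · apply force.paste
      exact .limp _ _ _ (hs h) (iha.1 _ ha) (.ret _ (ihb.2 _ (by simp)))
  | box a iha =>
    refine ⟨fun S h => ?_, fun S h => ?_⟩
    · refine Cov.run (Cov.map h subset_rfl (fun U V h1 _ ⟨d, hd, hf⟩ => ?_))
      exact .m _ _ _ (h1 hd) (iha.1 _ hf)
    · exact .ret _ ⟨a, h, iha.2 _ (by simp)⟩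

theorem force.sound {S : Set Fm} {θ : Fm} (h : D S θ) :
    ∀ T, (∀ x ∈ S, force x T) → force θ T := by
  induction h with
  | ax S q h => intro T hT; exact hT _ h
  | lbot S θ h =>
    intro T hT
    apply force.paste
    have hb : D T .bot := hT _ h
    have : ∀ {U : Set Fm} {χ : Fm}, D U χ → χ = .bot → Cov (force θ) U := by
      intro U χ hU
      induction hU with
      | lbot S _ h => intro _; exact .bot _ h
      | land S a b _ h _ ih => intro e; exact .land _ _ _ h (ih e)
      | lor S a b _ h _ _ ih1 ih2 => intro e; exact .lor _ _ _ h (ih1 e) (ih2 e)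
      | limp S a b _ h h1 _ _ ih => intro e; exact .limp _ _ _ h h1 (ih e)
      | _ => intro e; cases e
    exact this hb rfl
  | land S a b θ h _ ih =>
    intro T hT
    apply ih
    intro x hx
    rcases hx with rfl | rfl | hx
    · exact (hT _ h).1
    · exact (hT _ h).2
    · exact hT _ hx
  | rand S a b _ _ ih1 ih2 => intro T hT; exact ⟨ih1 T hT, ih2 T hT⟩
  | lor S a b θ h _ _ ih1 ih2 =>
    intro T hT
    apply force.paste
    refine Cov.map (hT _ h) subset_rfl (fun U V h1 h2 hf => ?_)
    rcases hf with hf | hf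
    · apply ih1
      rintro x (rfl | hx)
      · exact force.mono _ h1 hf
      · exact force.mono _ h2 (hT _ hx)
    · apply ih2
      rintro x (rfl | hx)
      · exact force.mono _ h1 hf
      · exact force.mono _ h2 (hT _ hx)
  | ror₁ S a b _ ih => intro T hT; exact .ret _ (Or.inl (ih T hT))
  | ror₂ S a b _ ih => intro T hT; exact .ret _ (Or.inr (ih T hT))
  | limp S a b θ h _ _ ih1 ih2 =>
    intro T hT
    apply ih2
    rintro x (rfl | hx)
    · exact hT _ h T subset_rfl (ih1 T hT)
    · exact hT _ hx
  | rimp S a b _ ih =>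
    intro T hT U hU ha
    apply ih
    rintro x (rfl | hx)
    · exact ha
    · exact force.mono _ hU (hT _ hx)
  | m S a b h _ ih =>
    intro T hT
    refine Cov.map (hT _ h) subset_rfl (fun U V h1 _ ⟨d, hd, hf⟩ => ⟨d, h1 hd, ih _ ?_⟩)
    rintro x rfl
    exact hf

/-- Simultaneous cut. -/
theorem D.subst {S T : Set Fm} {θ : Fm} (h : D S θ) (hT : ∀ x ∈ S, D T x) : D T θ := by
  refine (force.reify_reflect θ).1 T (force.sound h T (fun x hx => ?_))
  exact force.sound (hT x hx) T (fun y hy => (force.reify_reflect y).2 T hy)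

theorem D.hyp {S : Set Fm} {a : Fm} (h : a ∈ S) : D S a :=
  (force.reify_reflect a).1 S ((force.reify_reflect a).2 S h)

theorem D.cut {S : Set Fm} {a θ : Fm} (h1 : D S a) (h2 : D (insert a S) θ) : D S θ := by
  apply h2.subst
  rintro x (rfl | hx)
  · exact h1
  · exact .hyp hx

theorem D.top (S : Set Fm) : D S .top := .rimp _ _ _ (.lbot _ _ (by simp))

theorem D.weak1 {S : Set Fm} {a θ : Fm} (h : D S θ) : D (insert a S) θ :=
  h.mono (Set.subset_insert _ _)

theorem D.mp {S : Set Fm} {a b : Fm} (h : D S (a.imp b)) (h2 : D S a) : D S b :=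
  h.cut (.limp _ _ _ _ (Set.mem_insert _ _) h2.weak1 (.hyp (by simp)))

theorem D.imp_iff {S : Set Fm} {a b : Fm} : D S (a.imp b) ↔ D (insert a S) b :=
  ⟨fun h => h.weak1.mp (.hyp (by simp)), .rimp _ _ _⟩

theorem D.and_iff {S : Set Fm} {a b : Fm} : D S (a.and b) ↔ D S a ∧ D S b := by
  refine ⟨fun h => ⟨?_, ?_⟩, fun h => .rand _ _ _ h.1 h.2⟩
  · exact h.cut (.land _ _ _ _ (Set.mem_insert _ _) (.hyp (by simp)))
  · exact h.cut (.land _ _ _ _ (Set.mem_insert _ _) (.hyp (by simp)))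

theorem D.or_elim {S : Set Fm} {a b θ : Fm} (h : D S (a.or b)) (h1 : D (insert a S) θ)
    (h2 : D (insert b S) θ) : D S θ :=
  h.cut (.lor _ _ _ _ (Set.mem_insert _ _)
    (h1.mono (Set.insert_subset_insert (Set.subset_insert _ _)))
    (h2.mono (Set.insert_subset_insert (Set.subset_insert _ _))))

theorem D.bot_elim {S : Set Fm} {θ : Fm} (h : D S .bot) : D S θ :=
  h.cut (.lbot _ _ (Set.mem_insert _ _))

theorem D.box_mono {S : Set Fm} {a b : Fm} (h : D S a.box) (h1 : D {a} b) : D S b.box :=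
  h.cut (.m _ _ _ (Set.mem_insert _ _) h1)

/-! ### Weights -/

/-- `w true` is the weight of a formula, `w false` its multiplier as an antecedent. -/
def w : Bool → Fm → ℕ
  | true, .atom _ => 1
  | false, .atom _ => 3
  | true, .bot => 1
  | false, .bot => 3
  | true, .and a b => w true a + w true b + 1
  | false, .and a b => w false a * w false b + 1
  | true, .or a b => w true a + w true b + 1
  | false, .or a b => w false a + w false b + 1
  | true, .imp a b => w false a * w true b
  | false, .imp a b => w false b + w true a + w true b + 1 + w false a * w true b
  | true, .box a => w true a + 1
  | false, .box a => w true a + 3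

theorem w_bound (a : Fm) : 1 ≤ w true a ∧ w true a + 2 ≤ w false a := by
  induction a with
  | atom q => simp [w]
  | bot => simp [w]
  | and a b iha ihb => simp only [w]; constructor <;> nlinarith
  | or a b iha ihb => simp only [w]; omega
  | imp a b iha ihb =>
    simp only [w]
    refine ⟨Nat.mul_pos (by omega) (by omega), by omega⟩
  | box a ih => simp only [w]; omega

/-- Weight of a context. -/
def wt (Γ : Multiset Fm) : ℕ := (Γ.map (w true)).sum

theorem wt_cons (a : Fm) (Γ : Multiset Fm) : wt (a ::ₘ Γ) = w true a + wt Γ := by simp [wt]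
theorem wt_zero : wt 0 = 0 := by simp [wt]

/-! ### Finite conjunctions and disjunctions -/

theorem bigand (l : List Fm) : ∃ E, (∀ b q, q ∈ Vb b E → ∃ e ∈ l, q ∈ Vb b e) ∧
    (∀ S, D S E ↔ ∀ e ∈ l, D S e) := by
  induction l with
  | nil => exact ⟨.top, by simp [Fm.top, Vb], fun S => by simp [D.top]⟩
  | cons a l ih =>
    obtain ⟨E, h1, h2⟩ := ih
    refine ⟨a.and E, ?_, ?_⟩
    · intro b q hq
      simp only [Vb, Finset.mem_union] at hq
      rcases hq with hq | hq
      · exact ⟨a, by simp, hq⟩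
      · obtain ⟨e, he, h⟩ := h1 _ _ hq
        exact ⟨e, by simp [he], h⟩
    · intro S
      rw [D.and_iff, h2]; simp

theorem bigor (l : List Fm) : ∃ A, (∀ b q, q ∈ Vb b A → ∃ e ∈ l, q ∈ Vb b e) ∧
    (∀ S, ∀ e ∈ l, D S e → D S A) ∧
    (∀ S θ, (∀ e ∈ l, D (insert e S) θ) → D (insert A S) θ) := by
  induction l with
  | nil => exact ⟨.bot, by simp [Vb], by simp, fun S θ _ => .lbot _ _ (by simp)⟩
  | cons a l ih =>
    obtain ⟨E, h1, h2, h3⟩ := ih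
    refine ⟨a.or E, ?_, ?_, ?_⟩
    · intro b q hq
      simp only [Vb, Finset.mem_union] at hq
      rcases hq with hq | hq
      · exact ⟨a, by simp, hq⟩
      · obtain ⟨e, he, h⟩ := h1 _ _ hq
        exact ⟨e, by simp [he], h⟩
    · intro S e he h
      rcases List.mem_cons.1 he with rfl | he
      · exact .ror₁ _ _ _ h
      · exact .ror₂ _ _ _ (h2 S e he h)
    · intro S θ h
      refine D.or_elim (.hyp (Set.mem_insert _ _)) ((h a (by simp)).mono ?_)
        ((h3 S θ (fun e he => h e (by simp [he]))).mono ?_)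
      · exact Set.insert_subset_insert (Set.subset_insert _ _)
      · exact Set.insert_subset_insert (Set.subset_insert _ _)

/-! ### Specification of the interpolants -/

/-- Variables of a context. -/
def Vc (b : Bool) (Γ : Multiset Fm) (q : ℕ) : Prop := ∃ γ ∈ Γ, q ∈ Vb b γ

theorem Vc_cons {b : Bool} {a : Fm} {Γ : Multiset Fm} {q : ℕ} :
    Vc b (a ::ₘ Γ) q ↔ q ∈ Vb b a ∨ Vc b Γ q := by
  simp [Vc]

/-- `p` does not occur in `a` with polarity `o`. -/
def Fr (p : ℕ) (o : Bool) (a : Fm) : Prop := p ∉ Vb o a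

/-- `p` does not occur with polarity `o` in the (arbitrary) set. -/
def FrS (p : ℕ) (o : Bool) (Δ : Set Fm) : Prop := ∀ δ ∈ Δ, Fr p o δ

theorem FrS.insert {p : ℕ} {o : Bool} {Δ : Set Fm} {a : Fm} (h : FrS p o Δ) (ha : Fr p o a) :
    FrS p o (insert a Δ) := by
  rintro x (rfl | hx)
  · exact ha
  · exact h x hx

theorem Fr_and {p : ℕ} {o : Bool} {a b : Fm} : Fr p o (a.and b) ↔ Fr p o a ∧ Fr p o b := by
  simp [Fr, Vb]
theorem Fr_or {p : ℕ} {o : Bool} {a b : Fm} : Fr p o (a.or b) ↔ Fr p o a ∧ Fr p o b := by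
  simp [Fr, Vb]
theorem Fr_imp {p : ℕ} {o : Bool} {a b : Fm} : Fr p o (a.imp b) ↔ Fr p (!o) a ∧ Fr p o b := by
  simp [Fr, Vb]
theorem Fr_box {p : ℕ} {o : Bool} {a : Fm} : Fr p o a.box ↔ Fr p o a := by
  simp [Fr, Vb]
theorem Fr_bot {p : ℕ} {o : Bool} : Fr p o .bot := by simp [Fr, Vb]
theorem Fr_top {p : ℕ} {o : Bool} : Fr p o .top := by simp [Fr, Vb, Fm.top]

def MinE (p : ℕ) (o : Bool) (Γ : Multiset Fm) (E : Fm) : Prop :=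
  ∀ Δ, FrS p o Δ → ∀ χ, Fr p (!o) χ → D (ms Γ ∪ Δ) χ → D (insert E Δ) χ

structure IsE (p : ℕ) (o : Bool) (Γ : Multiset Fm) (E : Fm) : Prop where
  free : Fr p (!o) E
  var : ∀ b q, q ∈ Vb b E → Vc b Γ q
  prov : D (ms Γ) E
  min : MinE p o Γ E

structure IsA (p : ℕ) (o : Bool) (Γ : Multiset Fm) (φ A : Fm) : Prop where
  free : Fr p o A
  var : ∀ b q, q ∈ Vb b A → q ∈ Vb b φ ∨ Vc (!b) Γ q
  prov : D (insert A (ms Γ)) φ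
  max : ∀ E, MinE p o Γ E → ∀ Δ, FrS p o Δ → D (ms Γ ∪ Δ) φ → D (insert E Δ) A

/-- `θ` is obtained from `Γ ∪ Δ` by a right rule. -/
def RR (S : Set Fm) : Fm → Prop
  | .atom q => Fm.atom q ∈ S
  | .bot => False
  | .and a b => D S (a.and b)
  | .or a b => D S a ∨ D S b
  | .imp a b => D S (a.imp b)
  | .box b => ∃ d : Fm, d.box ∈ S ∧ D {d} b

theorem main_lemma {p : ℕ} {o : Bool} {Γ : Multiset Fm} {E : Fm}
    (nbot : Fm.bot ∉ Γ) (nand : ∀ a b, Fm.and a b ∉ Γ) (nor : ∀ a b, Fm.or a b ∉ Γ)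
    (KA : ∀ q, Fm.atom q ∈ Γ → Fr p (!o) (.atom q) → D {E} (.atom q))
    (KB : ∀ d x, Fm.box d ∈ Γ → D {d} x → Fr p (!o) x → D {E} x.box)
    (KH : ∀ χ, Fr p (!o) χ → ∀ Δ, FrS p o Δ → D (ms Γ ∪ Δ) χ →
      ∀ a c, Fm.imp a c ∈ Γ → RR (ms Γ ∪ Δ) a → D (insert E Δ) χ)
    {X : Set Fm} {θ : Fm} (h : D X θ) :
    ∀ Δ, FrS p o Δ → X ⊆ ms Γ ∪ Δ →
      (Fr p (!o) θ → D (insert E Δ) θ) ∧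
      (∀ g, (∀ Δ', Δ ⊆ Δ' → FrS p o Δ' → ∀ a c, Fm.imp a c ∈ Γ → RR (ms Γ ∪ Δ') a →
          D (insert E Δ') g) →
        (∀ Δ', Δ ⊆ Δ' → FrS p o Δ' → RR (ms Γ ∪ Δ') θ → D (insert E Δ') g) →
        D (insert E Δ) g) := by
  induction h with
  | ax S q h =>
    intro Δ hΔ hX
    refine ⟨fun hf => ?_, fun g _ h2 => h2 Δ subset_rfl hΔ (hX h)⟩
    rcases hX h with h | h
    · exact (KA q h hf).mono (by simp)
    · exact .hyp (by simp [h])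
  | lbot S θ h =>
    intro Δ hΔ hX
    rcases hX h with h | h
    · exact absurd h nbot
    · exact ⟨fun _ => .lbot _ _ (by simp [h]), fun g _ _ => .lbot _ _ (by simp [h])⟩
  | land S a b θ h _ ih =>
    intro Δ hΔ hX
    rcases hX h with h | h
    · exact absurd h (nand _ _)
    · have hab := Fr_and.1 (hΔ _ h)
      have hs : ∀ χ, D (insert E (insert a (insert b Δ))) χ → D (insert E Δ) χ := by
        intro χ hχ
        refine .land _ a b _ (by simp [h]) (hχ.mono ?_)
        intro x; simp; tauto
      obtain ⟨i1, i2⟩ := ih (insert a (insert b Δ)) ((hΔ.insert hab.2).insert hab.1) (by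
        intro x hx
        rcases hx with rfl | rfl | hx
        · simp
        · simp
        · rcases hX hx with hx | hx
          · exact Or.inl hx
          · simp [hx])
      have hsub : Δ ⊆ insert a (insert b Δ) := fun x hx => by simp [hx]
      exact ⟨fun hf => hs _ (i1 hf), fun g h1 h2 => hs _ (i2 g
        (fun Δ' hd => h1 Δ' (hsub.trans hd)) (fun Δ' hd => h2 Δ' (hsub.trans hd)))⟩
  | rand S a b h1 h2 ih1 ih2 =>
    intro Δ hΔ hX
    refine ⟨fun hf => ?_, fun g _ k2 => k2 Δ subset_rfl hΔ ((D.rand _ _ _ h1 h2).mono hX)⟩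
    have := Fr_and.1 hf
    exact .rand _ _ _ ((ih1 Δ hΔ hX).1 this.1) ((ih2 Δ hΔ hX).1 this.2)
  | lor S a b θ h _ _ ih1 ih2 =>
    intro Δ hΔ hX
    rcases hX h with h | h
    · exact absurd h (nor _ _)
    · have hab := Fr_or.1 (hΔ _ h)
      have hs : ∀ χ, D (insert E (insert a Δ)) χ → D (insert E (insert b Δ)) χ →
          D (insert E Δ) χ := by
        intro χ h1 h2
        refine .lor _ a b _ (by simp [h]) (h1.mono ?_) (h2.mono ?_)
        · intro x; simp; tauto
        · intro x; simp; tauto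
      have hsub : ∀ y, S ⊆ ms Γ ∪ insert y Δ := fun y x hx => by
        rcases hX hx with hx | hx
        · exact Or.inl hx
        · simp [hx]
      obtain ⟨i1, i2⟩ := ih1 (insert a Δ) (hΔ.insert hab.1)
        (Set.insert_subset (by simp) (hsub a))
      obtain ⟨j1, j2⟩ := ih2 (insert b Δ) (hΔ.insert hab.2)
        (Set.insert_subset (by simp) (hsub b))
      refine ⟨fun hf => hs _ (i1 hf) (j1 hf), fun g h1 h2 => hs _ (i2 g ?_ ?_) (j2 g ?_ ?_)⟩
      · exact fun Δ' hd => h1 Δ' ((Set.subset_insert _ _).trans hd)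
      · exact fun Δ' hd => h2 Δ' ((Set.subset_insert _ _).trans hd)
      · exact fun Δ' hd => h1 Δ' ((Set.subset_insert _ _).trans hd)
      · exact fun Δ' hd => h2 Δ' ((Set.subset_insert _ _).trans hd)
  | ror₁ S a b h ih =>
    intro Δ hΔ hX
    exact ⟨fun hf => .ror₁ _ _ _ ((ih Δ hΔ hX).1 (Fr_or.1 hf).1),
      fun g _ k2 => k2 Δ subset_rfl hΔ (Or.inl (h.mono hX))⟩
  | ror₂ S a b h ih =>
    intro Δ hΔ hX
    exact ⟨fun hf => .ror₂ _ _ _ ((ih Δ hΔ hX).1 (Fr_or.1 hf).2),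
      fun g _ k2 => k2 Δ subset_rfl hΔ (Or.inr (h.mono hX))⟩
  | limp S a b θ h h1 h2 ih1 ih2 =>
    intro Δ hΔ hX
    have hder : D (ms Γ ∪ Δ) θ := (D.limp _ _ _ _ h h1 h2).mono hX
    rcases hX h with h | h
    · obtain ⟨_, i2⟩ := ih1 Δ hΔ hX
      refine ⟨fun hf => ?_, fun g k1 k2 => ?_⟩
      · have hk : ∀ Δ', Δ ⊆ Δ' → FrS p o Δ' → ∀ a c, Fm.imp a c ∈ Γ → RR (ms Γ ∪ Δ') a →
            D (insert E Δ') θ := fun Δ' hd hF a c hm hr =>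
          KH θ hf Δ' hF (hder.mono (Set.union_subset_union_right _ hd)) a c hm hr
        exact i2 θ hk (fun Δ' hd hF hr => hk Δ' hd hF a b h hr)
      · exact i2 g k1 (fun Δ' hd hF hr => k1 Δ' hd hF a b h hr)
    · have hab := Fr_imp.1 (hΔ _ h)
      have ha := (ih1 Δ hΔ hX).1 hab.1
      have hs : ∀ χ, D (insert E (insert b Δ)) χ → D (insert E Δ) χ := by
        intro χ hχ
        refine .limp _ a b _ (by simp [h]) ha (hχ.mono ?_)
        intro x; simp; tauto
      obtain ⟨i1, i2⟩ := ih2 (insert b Δ) (hΔ.insert hab.2)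
        (Set.insert_subset (by simp) (fun x hx => by
          rcases hX hx with hx | hx
          · exact Or.inl hx
          · simp [hx]))
      refine ⟨fun hf => hs _ (i1 hf), fun g h1 h2 => hs _ (i2 g ?_ ?_)⟩
      · exact fun Δ' hd => h1 Δ' ((Set.subset_insert _ _).trans hd)
      · exact fun Δ' hd => h2 Δ' ((Set.subset_insert _ _).trans hd)
  | rimp S a b h ih =>
    intro Δ hΔ hX
    refine ⟨fun hf => ?_, fun g _ k2 => k2 Δ subset_rfl hΔ ((D.rimp _ _ _ h).mono hX)⟩
    have hab := Fr_imp.1 hf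
    rw [Bool.not_not] at hab
    have := (ih (insert a Δ) (hΔ.insert hab.1) (Set.insert_subset (by simp) (fun x hx => by
          rcases hX hx with hx | hx
          · exact Or.inl hx
          · simp [hx]))).1 hab.2
    exact .rimp _ _ _ (this.mono (by intro x; simp; tauto))
  | m S a b h h1 _ =>
    intro Δ hΔ hX
    refine ⟨fun hf => ?_, fun g _ k2 => k2 Δ subset_rfl hΔ ⟨a, hX h, h1⟩⟩
    rcases hX h with h | h
    · exact (KB a b h h1 (Fr_box.1 hf)).mono (by simp)
    · exact .m _ a _ (by simp [h]) h1

/-! ### Reductions of contexts -/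

def Red (Γ : Multiset Fm) : Prop :=
  ∃ Γ₁, wt Γ₁ < wt Γ ∧ (∀ x ∈ Γ₁, D (ms Γ) x) ∧ (∀ x ∈ Γ, D (ms Γ₁) x) ∧
    ∀ b q, Vc b Γ₁ q → Vc b Γ q

theorem Red.of_cons {Γ : Multiset Fm} {x : Fm} (N : Multiset Fm)
    (hw : wt N < w true x) (h1 : ∀ y ∈ N, D (ms (x ::ₘ Γ)) y) (h2 : D (ms (N + Γ)) x)
    (hv : ∀ b q, Vc b N q → q ∈ Vb b x) : Red (x ::ₘ Γ) := by
  refine ⟨N + Γ, ?_, ?_, ?_, ?_⟩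
  · rw [wt_cons]; simp only [wt, Multiset.map_add, Multiset.sum_add] at *; omega
  · intro y hy
    rcases Multiset.mem_add.1 hy with hy | hy
    · exact h1 y hy
    · exact .hyp (by simp [ms, hy])
  · intro y hy
    rcases Multiset.mem_cons.1 hy with rfl | hy
    · exact h2
    · exact .hyp (by simp [ms, hy])
  · rintro b q ⟨γ, hγ, hq⟩
    rcases Multiset.mem_add.1 hγ with hγ | hγ
    · exact ⟨x, by simp, hv b q ⟨γ, hγ, hq⟩⟩
    · exact ⟨γ, by simp [hγ], hq⟩

theorem Red.and {Γ : Multiset Fm} {a b : Fm} (h : a.and b ∈ Γ) : Red Γ := by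
  obtain ⟨Γ, rfl⟩ := Multiset.exists_cons_of_mem h
  have hyp : D (ms (a.and b ::ₘ Γ)) (a.and b) := .hyp (by simp [ms])
  refine Red.of_cons (a ::ₘ b ::ₘ 0) ?_ ?_ ?_ ?_
  · simp [wt, w]
  · simp only [Multiset.mem_cons, Multiset.notMem_zero, or_false]
    rintro y (rfl | rfl)
    · exact (D.and_iff.1 hyp).1
    · exact (D.and_iff.1 hyp).2
  · exact .rand _ _ _ (.hyp (by simp [ms])) (.hyp (by simp [ms]))
  · intro b q; simp [Vc, Vb]

theorem Red.and_imp {Γ : Multiset Fm} {a b c : Fm} (h : (a.and b).imp c ∈ Γ) : Red Γ := by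
  obtain ⟨Γ, rfl⟩ := Multiset.exists_cons_of_mem h
  refine Red.of_cons (a.imp (b.imp c) ::ₘ 0) ?_ ?_ ?_ ?_
  · have := w_bound c
    simp [wt, w]; nlinarith
  · simp only [Multiset.mem_cons, Multiset.notMem_zero, or_false]
    rintro y rfl
    rw [D.imp_iff, D.imp_iff]
    exact D.mp (a := a.and b) (.hyp (by simp [ms]))
      (.rand _ _ _ (.hyp (by simp)) (.hyp (by simp)))
  · rw [D.imp_iff]
    have hyp : D (insert (a.and b) (ms ((a.imp (b.imp c) ::ₘ 0) + Γ))) (a.and b) :=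
      .hyp (by simp)
    rw [D.and_iff] at hyp
    exact D.mp (D.mp (.hyp (by simp [ms])) hyp.1) hyp.2
  · intro b q; simp [Vc, Vb]

theorem Red.or_imp {Γ : Multiset Fm} {a b c : Fm} (h : (a.or b).imp c ∈ Γ) : Red Γ := by
  obtain ⟨Γ, rfl⟩ := Multiset.exists_cons_of_mem h
  refine Red.of_cons (a.imp c ::ₘ b.imp c ::ₘ 0) ?_ ?_ ?_ ?_
  · have := w_bound c
    simp [wt, w]; nlinarith
  · simp only [Multiset.mem_cons, Multiset.notMem_zero, or_false]
    rintro y (rfl | rfl)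
    · rw [D.imp_iff]
      exact D.mp (a := a.or b) (.hyp (by simp [ms])) (.ror₁ _ _ _ (.hyp (by simp)))
    · rw [D.imp_iff]
      exact D.mp (a := a.or b) (.hyp (by simp [ms])) (.ror₂ _ _ _ (.hyp (by simp)))
  · rw [D.imp_iff]
    refine D.or_elim (a := a) (b := b) (.hyp (by simp)) ?_ ?_
    · exact D.mp (a := a) (.hyp (by simp [ms])) (.hyp (by simp))
    · exact D.mp (a := b) (.hyp (by simp [ms])) (.hyp (by simp))
  · intro b q; simp [Vc, Vb]; tauto

/-- An implication whose antecedent follows from the rest of the context. -/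
theorem Red.imp {Γ : Multiset Fm} {a c : Fm} (h : D (ms Γ) a) : Red (a.imp c ::ₘ Γ) := by
  refine Red.of_cons (c ::ₘ 0) ?_ ?_ ?_ ?_
  · have := w_bound c
    have := w_bound a
    simp [wt, w]; nlinarith
  · simp only [Multiset.mem_cons, Multiset.notMem_zero, or_false]
    rintro y rfl
    exact D.mp (a := a) (.hyp (by simp [ms])) (by rw [ms_cons]; exact h.weak1)
  · rw [D.imp_iff]; exact .hyp (by simp [ms])
  · intro b q; simp [Vc, Vb]; tauto

/-- Irreducible contexts. -/
structure Irr (Γ : Multiset Fm) : Prop where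
  red : ¬ Red Γ
  nbot : Fm.bot ∉ Γ
  nor : ∀ a b, Fm.or a b ∉ Γ

section Construction

variable {p : ℕ} {o : Bool}

theorem minE_zero : MinE p o 0 .top := by
  intro Δ _ χ _ h
  rw [ms_zero, Set.empty_union] at h
  exact h.weak1

theorem frS_singleton {d : Fm} (h : Fr p o d) : FrS p o {d} := by
  rintro x rfl; exact h

/-- Interpolating a boxed formula: `d ⊢ b` with `d` free gives `d ⊢ A(⇒ b)`. -/
theorem IsA.box {b A d : Fm} (hA : IsA p o 0 b A) (hd : Fr p o d) (h : D {d} b) : D {d} A := by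
  have := hA.max .top minE_zero {d} (frS_singleton hd) (by rw [ms_zero, Set.empty_union]; exact h)
  exact (D.top _).cut this

theorem ex_B {Γ : Multiset Fm} {a c : Fm} (irr : Irr (a.imp c ::ₘ Γ))
    (ihE : ∀ Γ₁, wt Γ₁ < wt (a.imp c ::ₘ Γ) → ∃ E, IsE p o Γ₁ E)
    (ihA : ∀ Γ₁ φ, wt Γ₁ + w true φ < wt (a.imp c ::ₘ Γ) → ∃ A, IsA p o Γ₁ φ A) :
    ∃ B, Fr p o B ∧ (∀ b q, q ∈ Vb b B → Vc (!b) (a.imp c ::ₘ Γ) q) ∧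
      D (insert B (ms (a.imp c ::ₘ Γ))) a ∧
      ∀ Δ, FrS p o Δ → RR (ms (a.imp c ::ₘ Γ) ∪ Δ) a → D Δ B := by
  cases a with
  | atom q =>
    by_cases hq : Fr p o (.atom q)
    · refine ⟨.atom q, hq, ?_, .hyp (by simp), ?_⟩
      · intro b r hr
        exact Vc_cons.2 (Or.inl (by simp [Vb] at hr ⊢; exact Or.inl hr))
      · intro Δ _ hr
        rcases hr with hr | hr
        · exfalso
          apply irr.red
          apply Red.imp
          refine .hyp ?_
          simpa [ms] using hr
        · exact .hyp hr
    · refine ⟨.bot, Fr_bot, by simp [Vb], .lbot _ _ (by simp), ?_⟩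
      intro Δ hΔ hr
      exfalso
      rcases hr with hr | hr
      · apply irr.red
        apply Red.imp
        refine .hyp ?_
        simpa [ms] using hr
      · exact hq (hΔ _ hr)
  | bot =>
    exact ⟨.bot, Fr_bot, by simp [Vb], .lbot _ _ (by simp), fun Δ _ h => h.elim⟩
  | and a b => exact absurd (Red.and_imp (Multiset.mem_cons_self _ _)) irr.red
  | or a b => exact absurd (Red.or_imp (Multiset.mem_cons_self _ _)) irr.red
  | imp a b =>
    have hc := w_bound c
    have hb := w_bound b
    have hw : w true a + (w true (b.imp c) + wt Γ) + w true b < wt ((a.imp b).imp c ::ₘ Γ) := by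
      rw [wt_cons]; simp only [w]; nlinarith [Nat.zero_le (w false a * w true b * w true c)]
    obtain ⟨E, hE⟩ := ihE (a ::ₘ b.imp c ::ₘ Γ) (by rw [wt_cons, wt_cons]; omega)
    obtain ⟨A, hA⟩ := ihA (a ::ₘ b.imp c ::ₘ Γ) b (by rw [wt_cons, wt_cons]; omega)
    refine ⟨E.imp A, Fr_imp.2 ⟨hE.free, hA.free⟩, ?_, ?_, ?_⟩
    · intro s q hq
      simp only [Vb, Finset.mem_union] at hq
      rcases hq with hq | hq
      · have := hE.var _ _ hq
        simp only [Vc_cons, Vb, Finset.mem_union, Bool.not_not] at this ⊢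
        tauto
      · have := hA.var _ _ hq
        simp only [Vc_cons, Vb, Finset.mem_union, Bool.not_not] at this ⊢
        tauto
    · rw [D.imp_iff]
      set S := insert a (insert (E.imp A) (ms ((a.imp b).imp c ::ₘ Γ))) with hS
      have hall : ∀ x ∈ ms (a ::ₘ b.imp c ::ₘ Γ), D S x := by
        intro x hx
        simp only [ms_cons] at hx
        rcases hx with rfl | rfl | hx
        · exact .hyp (by simp [hS])
        · rw [D.imp_iff]
          refine D.mp (a := a.imp b) (.hyp (by simp [hS, ms])) ?_
          rw [D.imp_iff]; exact .hyp (by simp)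
        · exact .hyp (by simp only [hS, ms_cons]; simp [hx])
      have h1 : D S E := hE.prov.subst hall
      have h2 : D S A := D.mp (.hyp (by simp [hS])) h1
      refine hA.prov.subst ?_
      rintro x (rfl | hx)
      · exact h2
      · exact hall x hx
    · intro Δ hΔ hr
      rw [D.imp_iff]
      refine hA.max E hE.min Δ hΔ ?_
      have hr : D (ms ((a.imp b).imp c ::ₘ Γ) ∪ Δ) (a.imp b) := hr
      refine D.mp (a := a) ?_ (.hyp (by simp [ms]))
      refine hr.subst ?_
      rintro x (hx | hx)
      · rw [ms_cons] at hx
        rcases hx with rfl | hx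
        · rw [D.imp_iff]
          refine D.mp (a := b) (.hyp (by simp [ms])) ?_
          exact D.mp (a := a) (.hyp (by simp)) (.hyp (by simp [ms]))
        · exact .hyp (by simp only [ms_cons]; simp [hx])
      · exact .hyp (by simp [hx])
  | box a =>
    have hc := w_bound c
    obtain ⟨A, hA⟩ := ihA 0 a (by
      rw [wt_cons, wt_zero]; simp only [w]; nlinarith)
    refine ⟨A.box, Fr_box.2 hA.free, ?_, ?_, ?_⟩
    · intro s q hq
      have := hA.var _ _ hq
      simp only [Vc_cons, Vb, Finset.mem_union, Bool.not_not] at this ⊢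
      rcases this with h | ⟨γ, h, _⟩
      · tauto
      · simp at h
    · refine D.box_mono (a := A) (.hyp (by simp)) ?_
      have := hA.prov
      rw [ms_zero] at this
      simpa using this
    · rintro Δ hΔ ⟨d, hd | hd, h⟩
      · exfalso
        apply irr.red
        apply Red.imp
        refine .m _ d _ ?_ h
        simpa [ms] using hd
      · exact .m _ d _ hd (hA.box (Fr_box.1 (hΔ _ hd)) h)

/-- Packaging of `ex_B` together with the interpolant of `c, Γ`. -/
theorem ex_BE {Γ : Multiset Fm} {a c : Fm} (irr : Irr (a.imp c ::ₘ Γ))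
    (ihE : ∀ Γ₁, wt Γ₁ < wt (a.imp c ::ₘ Γ) → ∃ E, IsE p o Γ₁ E)
    (ihA : ∀ Γ₁ φ, wt Γ₁ + w true φ < wt (a.imp c ::ₘ Γ) → ∃ A, IsA p o Γ₁ φ A) :
    ∃ B E, Fr p o B ∧ (∀ b q, q ∈ Vb b B → Vc (!b) (a.imp c ::ₘ Γ) q) ∧
      (∀ Δ, FrS p o Δ → RR (ms (a.imp c ::ₘ Γ) ∪ Δ) a → D Δ B) ∧
      IsE p o (c ::ₘ Γ) E ∧ D (ms (a.imp c ::ₘ Γ)) (B.imp E) ∧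
      (∀ x ∈ ms (c ::ₘ Γ), D (insert B (ms (a.imp c ::ₘ Γ))) x) := by
  obtain ⟨B, h1, h2, h3, h4⟩ := ex_B irr ihE ihA
  have ha := w_bound a
  have hc := w_bound c
  obtain ⟨E, hE⟩ := ihE (c ::ₘ Γ) (by rw [wt_cons, wt_cons]; simp only [w]; nlinarith)
  have hall : ∀ x ∈ ms (c ::ₘ Γ), D (insert B (ms (a.imp c ::ₘ Γ))) x := by
    intro x hx
    rw [ms_cons] at hx
    rcases hx with rfl | hx
    · exact D.mp (a := a) (.hyp (by simp [ms])) h3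
    · exact .hyp (by simp only [ms_cons]; simp [hx])
  exact ⟨B, E, h1, h2, h4, hE, D.imp_iff.2 (hE.prov.subst hall), hall⟩

/-- In `Γ`, an implication may be replaced by its succedent. -/
theorem imp_to_succ {Γ : Multiset Fm} {a c χ : Fm} {Δ : Set Fm}
    (h : D (ms (a.imp c ::ₘ Γ) ∪ Δ) χ) : D (ms (c ::ₘ Γ) ∪ Δ) χ := by
  refine h.subst ?_
  rintro x (hx | hx)
  · rw [ms_cons] at hx
    rcases hx with rfl | hx
    · rw [D.imp_iff]; exact .hyp (by simp [ms])
    · exact .hyp (by simp only [ms_cons]; simp [hx])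
  · exact .hyp (by simp [hx])

theorem Irr.nand {Γ : Multiset Fm} (irr : Irr Γ) (a b : Fm) : Fm.and a b ∉ Γ :=
  fun h => irr.red (Red.and h)

instance : Nonempty Fm := ⟨.bot⟩

theorem irr_E {Γ : Multiset Fm} (irr : Irr Γ)
    (ihE : ∀ Γ₁, wt Γ₁ < wt Γ → ∃ E, IsE p o Γ₁ E)
    (ihA : ∀ Γ₁ φ, wt Γ₁ + w true φ < wt Γ → ∃ A, IsA p o Γ₁ φ A) :
    ∃ E, IsE p o Γ E := by
  have key : ∀ γ ∈ Γ, ∃ e, (Fr p (!o) e ∧ (∀ b q, q ∈ Vb b e → Vc b Γ q) ∧ D (ms Γ) e) ∧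
      (∀ q, γ = .atom q → Fr p (!o) (.atom q) → D {e} (.atom q)) ∧
      (∀ d x, γ = .box d → D {d} x → Fr p (!o) x → D {e} x.box) ∧
      (∀ a c, γ = .imp a c → ∀ χ, Fr p (!o) χ → ∀ Δ, FrS p o Δ → D (ms Γ ∪ Δ) χ →
        RR (ms Γ ∪ Δ) a → D (insert e Δ) χ) := by
    intro γ hγ
    cases γ with
    | atom q =>
      by_cases hq : Fr p (!o) (.atom q)
      · refine ⟨.atom q, ⟨hq, fun b r hr => ⟨_, hγ, hr⟩, .hyp hγ⟩, ?_, by simp, by simp⟩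
        rintro r e _; cases e; exact .hyp (by simp)
      · refine ⟨.top, ⟨Fr_top, by simp [Vb, Fm.top], D.top _⟩, ?_, by simp, by simp⟩
        rintro r e h; cases e; exact absurd h hq
    | bot => exact absurd hγ irr.nbot
    | and a b => exact absurd hγ (irr.nand _ _)
    | or a b => exact absurd hγ (irr.nor _ _)
    | box d =>
      obtain ⟨E, hE⟩ := ihE {d} (by
        obtain ⟨Γ', rfl⟩ := Multiset.exists_cons_of_mem hγ
        rw [wt_cons]; simp [wt, w]; omega)
      have hms : ms {d} = {d} := by ext x; simp [ms]
      refine ⟨E.box, ⟨Fr_box.2 hE.free, ?_, ?_⟩, by simp, ?_, by simp⟩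
      · intro b q hq
        obtain ⟨γ, h1, h2⟩ := hE.var _ _ hq
        rw [Multiset.mem_singleton] at h1
        subst h1
        exact ⟨_, hγ, h2⟩
      · have := hE.prov
        rw [hms] at this
        exact .m _ d _ hγ this
      · rintro d' x e hx hf
        cases e
        refine .m _ E _ (by simp) ?_
        have := hE.min ∅ (by simp [FrS]) x hf (by rw [hms, Set.union_empty]; exact hx)
        simpa using this
    | imp a c =>
      obtain ⟨Γ, rfl⟩ := Multiset.exists_cons_of_mem hγ
      obtain ⟨B, E, h1, h2, h3, hE, h5, h6⟩ := ex_BE irr ihE ihA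
      refine ⟨B.imp E, ⟨Fr_imp.2 ⟨by rwa [Bool.not_not], hE.free⟩, ?_, h5⟩,
        by simp, by simp, ?_⟩
      · intro b q hq
        simp only [Vb, Finset.mem_union] at hq
        rcases hq with hq | hq
        · simpa using h2 _ _ hq
        · have := hE.var _ _ hq
          simp only [Vc_cons, Vb, Finset.mem_union] at this ⊢
          tauto
      · intro a' c' e χ hχ Δ hΔ hd hr
        cases e
        have hB := h3 Δ hΔ hr
        have hk := hE.min Δ hΔ χ hχ (imp_to_succ hd)
        refine hk.subst ?_
        rintro x (rfl | hx)
        · exact D.mp (a := B) (.hyp (by simp)) hB.weak1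
        · exact .hyp (by simp [hx])
  choose! f hf using key
  obtain ⟨E, hv, hd⟩ := bigand (Γ.toList.map f)
  have hEf : ∀ γ ∈ Γ, D {E} (f γ) := fun γ hγ =>
    (hd {E}).1 (.hyp (by simp)) _ (List.mem_map.2 ⟨γ, by simpa using hγ, rfl⟩)
  have hcut : ∀ γ ∈ Γ, ∀ Δ χ, D (insert (f γ) Δ) χ → D (insert E Δ) χ := by
    intro γ hγ Δ χ h
    refine h.subst ?_
    rintro x (rfl | hx)
    · exact (hEf γ hγ).mono (by simp)
    · exact .hyp (by simp [hx])
  have hcut' : ∀ γ ∈ Γ, ∀ χ, D {f γ} χ → D {E} χ := by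
    intro γ hγ χ h
    refine h.subst ?_
    rintro x rfl
    exact hEf γ hγ
  refine ⟨E, ?_, ?_, ?_, ?_⟩
  · intro hp
    obtain ⟨e, he, hq⟩ := hv _ _ hp
    obtain ⟨γ, hγ, rfl⟩ := List.mem_map.1 he
    exact (hf γ (by simpa using hγ)).1.1 hq
  · intro b q hq
    obtain ⟨e, he, hq⟩ := hv _ _ hq
    obtain ⟨γ, hγ, rfl⟩ := List.mem_map.1 he
    exact (hf γ (by simpa using hγ)).1.2.1 b q hq
  · rw [hd]
    intro e he
    obtain ⟨γ, hγ, rfl⟩ := List.mem_map.1 he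
    exact (hf γ (by simpa using hγ)).1.2.2
  · intro Δ hΔ χ hχ h
    refine (main_lemma (Γ := Γ) (E := E) irr.nbot irr.nand irr.nor ?_ ?_ ?_ h Δ hΔ subset_rfl).1 hχ
    · intro q hq hfr
      exact hcut' _ hq _ ((hf _ hq).2.1 q rfl hfr)
    · intro d x hm hx hfr
      exact hcut' _ hm _ ((hf _ hm).2.2.1 d x rfl hx hfr)
    · intro χ hχ Δ hΔ h a c hm hr
      exact hcut _ hm _ _ ((hf _ hm).2.2.2 a c rfl χ hχ Δ hΔ h hr)

/-- If `Γ ⊢ φ` the universal interpolant is `⊤`. -/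
theorem IsA.of_prov {Γ : Multiset Fm} {φ : Fm} (h : D (ms Γ) φ) : IsA p o Γ φ .top :=
  ⟨Fr_top, by simp [Vb, Fm.top], h.weak1, fun _ _ _ _ _ => D.top _⟩

theorem irr_A {Γ : Multiset Fm} {φ : Fm} (irr : Irr Γ)
    (nand : ∀ a b, φ ≠ .and a b) (nimp : ∀ a b, φ ≠ .imp a b)
    (ihE : ∀ Γ₁, wt Γ₁ < wt Γ + w true φ → ∃ E, IsE p o Γ₁ E)
    (ihA : ∀ Γ₁ φ₁, wt Γ₁ + w true φ₁ < wt Γ + w true φ → ∃ A, IsA p o Γ₁ φ₁ A) :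
    ∃ A, IsA p o Γ φ A := by
  by_cases hprov : D (ms Γ) φ
  · exact ⟨_, IsA.of_prov hprov⟩
  -- the part for right rules
  have hr : ∃ r, (Fr p o r ∧ (∀ b q, q ∈ Vb b r → q ∈ Vb b φ ∨ Vc (!b) Γ q) ∧
      D (insert r (ms Γ)) φ) ∧
      ∀ E, MinE p o Γ E → ∀ Δ, FrS p o Δ → RR (ms Γ ∪ Δ) φ → D (insert E Δ) r := by
    cases φ with
    | atom q =>
      by_cases hq : Fr p o (.atom q)
      · refine ⟨.atom q, ⟨hq, fun b r h => Or.inl h, .hyp (by simp)⟩, ?_⟩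
        rintro E _ Δ _ (h | h)
        · exact absurd (.hyp h) hprov
        · exact .hyp (by simp [h])
      · refine ⟨.bot, ⟨Fr_bot, by simp [Vb], .lbot _ _ (by simp)⟩, ?_⟩
        rintro E _ Δ hΔ (h | h)
        · exact absurd (.hyp h) hprov
        · exact absurd (hΔ _ h) hq
    | bot => exact ⟨.bot, ⟨Fr_bot, by simp [Vb], .hyp (by simp)⟩, fun E _ Δ _ h => h.elim⟩
    | and a b => exact absurd rfl (nand a b)
    | imp a b => exact absurd rfl (nimp a b)
    | or a b =>
      obtain ⟨A, hA⟩ := ihA Γ a (by simp only [w]; omega)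
      obtain ⟨B, hB⟩ := ihA Γ b (by simp only [w]; omega)
      refine ⟨A.or B, ⟨Fr_or.2 ⟨hA.free, hB.free⟩, ?_, ?_⟩, ?_⟩
      · intro s q hq
        simp only [Vb, Finset.mem_union] at hq ⊢
        rcases hq with hq | hq
        · have := hA.var _ _ hq; tauto
        · have := hB.var _ _ hq; tauto
      · refine D.or_elim (a := A) (b := B) (.hyp (by simp)) (.ror₁ _ _ _ (hA.prov.mono ?_))
          (.ror₂ _ _ _ (hB.prov.mono ?_))
        · exact Set.insert_subset_insert (Set.subset_insert _ _)
        · exact Set.insert_subset_insert (Set.subset_insert _ _)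
      · rintro E hE Δ hΔ (h | h)
        · exact .ror₁ _ _ _ (hA.max E hE Δ hΔ h)
        · exact .ror₂ _ _ _ (hB.max E hE Δ hΔ h)
    | box b =>
      obtain ⟨A, hA⟩ := ihA 0 b (by rw [wt_zero]; simp only [w]; omega)
      refine ⟨A.box, ⟨Fr_box.2 hA.free, ?_, ?_⟩, ?_⟩
      · intro s q hq
        rcases hA.var _ _ hq with h | ⟨γ, h, _⟩
        · exact Or.inl h
        · simp at h
      · refine D.box_mono (a := A) (.hyp (by simp)) ?_
        have := hA.prov
        rw [ms_zero] at this
        simpa using this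
      · rintro E _ Δ hΔ ⟨d, hd | hd, h⟩
        · exact absurd (.m _ d _ hd h) hprov
        · exact .m _ d _ (by simp [hd]) (hA.box (Fr_box.1 (hΔ _ hd)) h)
  -- the part for left implications
  have hl : ∀ γ ∈ Γ, ∃ r, (Fr p o r ∧ (∀ b q, q ∈ Vb b r → q ∈ Vb b φ ∨ Vc (!b) Γ q) ∧
      D (insert r (ms Γ)) φ) ∧
      ∀ a c, γ = .imp a c → ∀ E, MinE p o Γ E → ∀ Δ, FrS p o Δ → D (ms Γ ∪ Δ) φ →
        RR (ms Γ ∪ Δ) a → D (insert E Δ) r := by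
    intro γ hγ
    by_cases hi : ∃ a c, γ = .imp a c
    · obtain ⟨a, c, rfl⟩ := hi
      obtain ⟨Γ, rfl⟩ := Multiset.exists_cons_of_mem hγ
      obtain ⟨B, E2, h1, h2, h3, hE, h5, h6⟩ := ex_BE irr
        (fun Γ₁ h => ihE Γ₁ (by omega)) (fun Γ₁ ψ h => ihA Γ₁ ψ (by omega))
      have ha := w_bound a
      have hc := w_bound c
      obtain ⟨A2, hA⟩ := ihA (c ::ₘ Γ) φ (by rw [wt_cons, wt_cons]; simp only [w]; nlinarith)
      refine ⟨B.and A2, ⟨Fr_and.2 ⟨h1, hA.free⟩, ?_, ?_⟩, ?_⟩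
      · intro b q hq
        simp only [Vb, Finset.mem_union] at hq
        rcases hq with hq | hq
        · exact Or.inr (h2 _ _ hq)
        · have := hA.var _ _ hq
          simp only [Vc_cons, Vb, Finset.mem_union] at this ⊢
          tauto
      · have hyp : D (insert (B.and A2) (ms (a.imp c ::ₘ Γ))) (B.and A2) := .hyp (by simp)
        rw [D.and_iff] at hyp
        refine hA.prov.subst ?_
        rintro x (rfl | hx)
        · exact hyp.2
        · refine (h6 x hx).subst ?_
          rintro y (rfl | hy)
          · exact hyp.1
          · exact .hyp (by simp [hy])
      · intro a' c' e E hmin Δ hΔ hd hr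
        cases e
        have hB := h3 Δ hΔ hr
        refine .rand _ _ _ hB.weak1 ?_
        have hEE : D {E} (B.imp E2) := by
          have := hmin ∅ (by simp [FrS]) (B.imp E2)
            (Fr_imp.2 ⟨by rwa [Bool.not_not], hE.free⟩) (by rw [Set.union_empty]; exact h5)
          simpa using this
        refine (hA.max E2 hE.min Δ hΔ (imp_to_succ hd)).subst ?_
        rintro x (rfl | hx)
        · exact D.mp (hEE.mono (by simp)) hB.weak1
        · exact .hyp (by simp [hx])
    · refine ⟨.bot, ⟨Fr_bot, by simp [Vb], .lbot _ _ (by simp)⟩, ?_⟩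
      intro a c e
      exact absurd ⟨a, c, e⟩ hi
  obtain ⟨r, hr1, hr2⟩ := hr
  choose! f hf using hl
  obtain ⟨A, hv, hin, hel⟩ := bigor (r :: Γ.toList.map f)
  have hgood : ∀ e ∈ r :: Γ.toList.map f, Fr p o e ∧
      (∀ b q, q ∈ Vb b e → q ∈ Vb b φ ∨ Vc (!b) Γ q) ∧ D (insert e (ms Γ)) φ := by
    intro e he
    rcases List.mem_cons.1 he with rfl | he
    · exact hr1
    · obtain ⟨γ, hγ, rfl⟩ := List.mem_map.1 he
      exact (hf γ (by simpa using hγ)).1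
  refine ⟨A, ?_, ?_, ?_, ?_⟩
  · intro hp
    obtain ⟨e, he, hq⟩ := hv _ _ hp
    exact (hgood e he).1 hq
  · intro b q hq
    obtain ⟨e, he, hq⟩ := hv _ _ hq
    exact (hgood e he).2.1 b q hq
  · exact hel _ _ (fun e he => (hgood e he).2.2)
  · intro E hE Δ hΔ h
    have hmin0 : ∀ χ, Fr p (!o) χ → D (ms Γ) χ → D {E} χ := by
      intro χ hχ h
      have := hE ∅ (by simp [FrS]) χ hχ (by rw [Set.union_empty]; exact h)
      simpa using this
    refine (main_lemma (p := p) (o := o) (Γ := Γ) (E := E) irr.nbot irr.nand irr.nor ?_ ?_ ?_ h Δ hΔ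
      subset_rfl).2 A ?_ ?_
    · intro q hq hfr
      exact hmin0 _ hfr (.hyp hq)
    · intro d x hm hx hfr
      exact hmin0 _ (Fr_box.2 hfr) (.m _ d _ hm hx)
    · intro χ hχ Δ hΔ h _ _ _ _
      exact hE Δ hΔ χ hχ h
    · intro Δ' hd hΔ' a c hm hrr
      refine hin _ (f (a.imp c)) ?_ ((hf _ hm).2 a c rfl E hE Δ' hΔ'
        (h.mono (Set.union_subset_union_right _ hd)) hrr)
      exact List.mem_cons.2 (Or.inr (List.mem_map.2 ⟨_, by simpa using hm, rfl⟩))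
    · intro Δ' hd hΔ' hrr
      exact hin _ r (by simp) (hr2 E hE Δ' hΔ' hrr)

/-- Context equivalence transfers derivability with side context. -/
theorem subst_ctx {Γ Γ₁ : Multiset Fm} {Δ : Set Fm} {χ : Fm} (h : ∀ x ∈ Γ, D (ms Γ₁) x)
    (hd : D (ms Γ ∪ Δ) χ) : D (ms Γ₁ ∪ Δ) χ := by
  refine hd.subst ?_
  rintro x (hx | hx)
  · exact (h x hx).mono Set.subset_union_left
  · exact .hyp (by simp [hx])

theorem step_E {Γ : Multiset Fm}
    (ihE : ∀ Γ₁, wt Γ₁ < wt Γ → ∃ E, IsE p o Γ₁ E)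
    (ihA : ∀ Γ₁ φ, wt Γ₁ + w true φ < wt Γ → ∃ A, IsA p o Γ₁ φ A) :
    ∃ E, IsE p o Γ E := by
  by_cases hred : Red Γ
  · obtain ⟨Γ₁, hw, h1, h2, h3⟩ := hred
    obtain ⟨E, hE⟩ := ihE Γ₁ hw
    exact ⟨E, hE.free, fun b q hq => h3 b q (hE.var b q hq), hE.prov.subst h1,
      fun Δ hΔ χ hχ h => hE.min Δ hΔ χ hχ (subst_ctx h2 h)⟩
  by_cases hbot : Fm.bot ∈ Γ
  · exact ⟨.bot, Fr_bot, by simp [Vb], .hyp hbot, fun Δ _ χ _ _ => .lbot _ _ (by simp)⟩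
  by_cases hor : ∃ a b, Fm.or a b ∈ Γ
  · obtain ⟨a, b, hab⟩ := hor
    obtain ⟨Γ, rfl⟩ := Multiset.exists_cons_of_mem hab
    obtain ⟨E1, hE1⟩ := ihE (a ::ₘ Γ) (by rw [wt_cons, wt_cons]; simp only [w]; omega)
    obtain ⟨E2, hE2⟩ := ihE (b ::ₘ Γ) (by rw [wt_cons, wt_cons]; simp only [w]; omega)
    refine ⟨E1.or E2, Fr_or.2 ⟨hE1.free, hE2.free⟩, ?_, ?_, ?_⟩
    · intro s q hq
      simp only [Vb, Finset.mem_union] at hq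
      rcases hq with hq | hq
      · have := hE1.var _ _ hq
        simp only [Vc_cons, Vb, Finset.mem_union] at this ⊢
        tauto
      · have := hE2.var _ _ hq
        simp only [Vc_cons, Vb, Finset.mem_union] at this ⊢
        tauto
    · have e1 := hE1.prov
      have e2 := hE2.prov
      rw [ms_cons] at *
      refine D.or_elim (a := a) (b := b) (.hyp (by simp)) (.ror₁ _ _ _ (e1.mono ?_))
        (.ror₂ _ _ _ (e2.mono ?_))
      · exact Set.insert_subset_insert (Set.subset_insert _ _)
      · exact Set.insert_subset_insert (Set.subset_insert _ _)
    · intro Δ hΔ χ hχ h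
      have i1 := hE1.min Δ hΔ χ hχ (subst_ctx (fun x hx => by
        rcases Multiset.mem_cons.1 hx with rfl | hx
        · exact .ror₁ _ _ _ (.hyp (by simp [ms]))
        · exact .hyp (by simp [ms, hx])) h)
      have i2 := hE2.min Δ hΔ χ hχ (subst_ctx (fun x hx => by
        rcases Multiset.mem_cons.1 hx with rfl | hx
        · exact .ror₂ _ _ _ (.hyp (by simp [ms]))
        · exact .hyp (by simp [ms, hx])) h)
      refine D.or_elim (a := E1) (b := E2) (.hyp (by simp)) (i1.mono ?_) (i2.mono ?_)
      · exact Set.insert_subset_insert (Set.subset_insert _ _)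
      · exact Set.insert_subset_insert (Set.subset_insert _ _)
  exact irr_E ⟨hred, hbot, fun a b h => hor ⟨a, b, h⟩⟩ ihE ihA

theorem step_A {Γ : Multiset Fm} {φ : Fm}
    (ihE : ∀ Γ₁, wt Γ₁ < wt Γ + w true φ → ∃ E, IsE p o Γ₁ E)
    (ihA : ∀ Γ₁ φ₁, wt Γ₁ + w true φ₁ < wt Γ + w true φ → ∃ A, IsA p o Γ₁ φ₁ A) :
    ∃ A, IsA p o Γ φ A := by
  by_cases hand : ∃ a b, φ = .and a b
  · obtain ⟨a, b, rfl⟩ := hand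
    obtain ⟨A, hA⟩ := ihA Γ a (by simp only [w]; omega)
    obtain ⟨B, hB⟩ := ihA Γ b (by simp only [w]; omega)
    refine ⟨A.and B, Fr_and.2 ⟨hA.free, hB.free⟩, ?_, ?_, ?_⟩
    · intro s q hq
      simp only [Vb, Finset.mem_union] at hq ⊢
      rcases hq with hq | hq
      · have := hA.var _ _ hq; tauto
      · have := hB.var _ _ hq; tauto
    · refine .land _ A B _ (by simp) (.rand _ _ _ (hA.prov.mono ?_) (hB.prov.mono ?_))
      · intro x; simp; tauto
      · intro x; simp; tauto
    · intro E hE Δ hΔ h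
      rw [D.and_iff] at h
      exact .rand _ _ _ (hA.max E hE Δ hΔ h.1) (hB.max E hE Δ hΔ h.2)
  by_cases himp : ∃ a b, φ = .imp a b
  · obtain ⟨a, b, rfl⟩ := himp
    have ha := w_bound a
    have hb := w_bound b
    have hw : w true a + wt Γ + w true b < wt Γ + w true (a.imp b) := by
      simp only [w]; nlinarith
    obtain ⟨E, hE⟩ := ihE (a ::ₘ Γ) (by rw [wt_cons]; omega)
    obtain ⟨A, hA⟩ := ihA (a ::ₘ Γ) b (by rw [wt_cons]; omega)
    refine ⟨E.imp A, Fr_imp.2 ⟨hE.free, hA.free⟩, ?_, ?_, ?_⟩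
    · intro s q hq
      simp only [Vb, Finset.mem_union] at hq ⊢
      rcases hq with hq | hq
      · have := hE.var _ _ hq
        simp only [Vc_cons] at this; tauto
      · have := hA.var _ _ hq
        simp only [Vc_cons] at this; tauto
    · rw [D.imp_iff]
      have e1 := hE.prov
      have e2 := hA.prov
      rw [ms_cons] at e1 e2
      have h1 : D (insert a (insert (E.imp A) (ms Γ))) A :=
        D.mp (a := E) (.hyp (by simp)) (e1.mono (Set.insert_subset_insert (Set.subset_insert _ _)))
      refine h1.cut (e2.mono ?_)
      intro x; simp; tauto
    · intro E' _ Δ hΔ h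
      rw [D.imp_iff] at h ⊢
      refine (hA.max E hE.min Δ hΔ ?_).mono (by intro x; simp; tauto)
      rwa [ms_cons, Set.insert_union]
  by_cases hred : Red Γ
  · obtain ⟨Γ₁, hw, h1, h2, h3⟩ := hred
    obtain ⟨A, hA⟩ := ihA Γ₁ φ (by omega)
    refine ⟨A, hA.free, fun b q hq => (hA.var b q hq).imp_right (h3 _ q), ?_, ?_⟩
    · refine hA.prov.subst ?_
      rintro x (rfl | hx)
      · exact .hyp (by simp)
      · exact (h1 x hx).weak1
    · intro E hE Δ hΔ h
      refine hA.max E ?_ Δ hΔ (subst_ctx h2 h)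
      intro Δ hΔ χ hχ h
      exact hE Δ hΔ χ hχ (subst_ctx h1 h)
  by_cases hbot : Fm.bot ∈ Γ
  · exact ⟨_, IsA.of_prov (.lbot _ _ hbot)⟩
  by_cases hor : ∃ a b, Fm.or a b ∈ Γ
  · obtain ⟨a, b, hab⟩ := hor
    obtain ⟨Γ, rfl⟩ := Multiset.exists_cons_of_mem hab
    have hw1 : wt (a ::ₘ Γ) < wt (a.or b ::ₘ Γ) := by
      rw [wt_cons, wt_cons]; simp only [w]; omega
    have hw2 : wt (b ::ₘ Γ) < wt (a.or b ::ₘ Γ) := by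
      rw [wt_cons, wt_cons]; simp only [w]; omega
    obtain ⟨E1, hE1⟩ := ihE (a ::ₘ Γ) (by omega)
    obtain ⟨E2, hE2⟩ := ihE (b ::ₘ Γ) (by omega)
    obtain ⟨A1, hA1⟩ := ihA (a ::ₘ Γ) φ (by omega)
    obtain ⟨A2, hA2⟩ := ihA (b ::ₘ Γ) φ (by omega)
    refine ⟨(E1.imp A1).and (E2.imp A2), Fr_and.2 ⟨Fr_imp.2 ⟨hE1.free, hA1.free⟩,
      Fr_imp.2 ⟨hE2.free, hA2.free⟩⟩, ?_, ?_, ?_⟩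
    · intro s q hq
      simp only [Vb, Finset.mem_union] at hq
      rcases hq with (hq | hq) | (hq | hq)
      · have := hE1.var _ _ hq
        simp only [Vc_cons, Vb, Finset.mem_union] at this ⊢
        tauto
      · have := hA1.var _ _ hq
        simp only [Vc_cons, Vb, Finset.mem_union] at this ⊢
        tauto
      · have := hE2.var _ _ hq
        simp only [Vc_cons, Vb, Finset.mem_union] at this ⊢
        tauto
      · have := hA2.var _ _ hq
        simp only [Vc_cons, Vb, Finset.mem_union] at this ⊢
        tauto
    · have aux : ∀ x E A, IsE p o (x ::ₘ Γ) E → IsA p o (x ::ₘ Γ) φ A → ∀ S,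
          D S (E.imp A) → ms Γ ⊆ S → D (insert x S) φ := by
        intro x E A hE hA S h hS
        have e1 := hE.prov
        have e2 := hA.prov
        rw [ms_cons] at e1 e2
        have h1 : D (insert x S) A :=
          D.mp h.weak1 (e1.mono (Set.insert_subset_insert hS))
        exact h1.cut (e2.mono (Set.insert_subset_insert (Set.insert_subset_insert hS)))
      set S := insert ((E1.imp A1).and (E2.imp A2)) (ms (a.or b ::ₘ Γ)) with hS
      have hyp : D S ((E1.imp A1).and (E2.imp A2)) := .hyp (by simp [hS])
      rw [D.and_iff] at hyp
      have hsub : ms Γ ⊆ S := by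
        intro x hx; simp only [hS, ms_cons]; simp [hx]
      exact D.or_elim (a := a) (b := b) (.hyp (by simp [hS, ms])) (aux _ _ _ hE1 hA1 S hyp.1 hsub)
        (aux _ _ _ hE2 hA2 S hyp.2 hsub)
    · intro E _ Δ hΔ h
      have i1 := hA1.max E1 hE1.min Δ hΔ (subst_ctx (fun x hx => by
        rcases Multiset.mem_cons.1 hx with rfl | hx
        · exact .ror₁ _ _ _ (.hyp (by simp [ms]))
        · exact .hyp (by simp [ms, hx])) h)
      have i2 := hA2.max E2 hE2.min Δ hΔ (subst_ctx (fun x hx => by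
        rcases Multiset.mem_cons.1 hx with rfl | hx
        · exact .ror₂ _ _ _ (.hyp (by simp [ms]))
        · exact .hyp (by simp [ms, hx])) h)
      refine .rand _ _ _ (.rimp _ _ _ (i1.mono ?_)) (.rimp _ _ _ (i2.mono ?_))
      · exact Set.insert_subset_insert (Set.subset_insert _ _)
      · exact Set.insert_subset_insert (Set.subset_insert _ _)
  exact irr_A ⟨hred, hbot, fun a b h => hor ⟨a, b, h⟩⟩ (fun a b h => hand ⟨a, b, h⟩)
    (fun a b h => himp ⟨a, b, h⟩) ihE ihA

theorem exists_interp (n : ℕ) : (∀ Γ, wt Γ = n → ∃ E, IsE p o Γ E) ∧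
    (∀ Γ φ, wt Γ + w true φ = n → ∃ A, IsA p o Γ φ A) := by
  induction n using Nat.strong_induction_on with
  | _ n ih =>
    constructor
    · rintro Γ rfl
      exact step_E (fun Γ₁ h => (ih _ h).1 Γ₁ rfl) (fun Γ₁ φ h => (ih _ h).2 Γ₁ φ rfl)
    · rintro Γ φ rfl
      exact step_A (fun Γ₁ h => (ih _ h).1 Γ₁ rfl) (fun Γ₁ φ h => (ih _ h).2 Γ₁ φ rfl)

end Construction

theorem iM_imp_iff {a b : Fm} : iM (a.imp b) ↔ D {a} b := by
  constructor
  · intro h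
    have := G3.toD h
    rw [ms_zero, D.imp_iff] at this
    simpa using this
  · intro h
    exact D.toG3 (.rimp ∅ _ _ (by simpa using h)) 0 (by simp)

/-- `iM` has the uniform Lyndon interpolation property: for every formula `φ`,
atom `p` and polarity `o` there are `p∘`-free formulas `E = ∃∘p φ` and
`A = ∀∘p φ`, with variables of each polarity among those of `φ`, such that
`iM ⊢ φ → E`, `iM ⊢ A → φ`, and for every `p∘`-free `ψ`:
`iM ⊢ φ → ψ` implies `iM ⊢ E → ψ`, and `iM ⊢ ψ → φ` implies `iM ⊢ ψ → A`. -/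
theorem iM_ULIP :
    ∀ (φ : Fm) (p : ℕ) (o : Bool), ∃ E A : Fm,
      p ∉ Vb o E ∧ p ∉ Vb o A ∧
      (∀ b, Vb b E ⊆ Vb b φ) ∧ (∀ b, Vb b A ⊆ Vb b φ) ∧
      iM (φ.imp E) ∧
      (∀ ψ, p ∉ Vb o ψ → iM (φ.imp ψ) → iM (E.imp ψ)) ∧
      iM (A.imp φ) ∧
      (∀ ψ, p ∉ Vb o ψ → iM (ψ.imp φ) → iM (ψ.imp A)) := by
  intro φ p o
  obtain ⟨E, hE⟩ := (exists_interp (p := p) (o := !o) _).1 {φ} rfl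
  obtain ⟨A, hA⟩ := (exists_interp (p := p) (o := o) _).2 0 φ rfl
  have hms : ms {φ} = {φ} := by ext x; simp [ms]
  refine ⟨E, A, ?_, hA.free, ?_, ?_, ?_, ?_, ?_, ?_⟩
  · have := hE.free
    rwa [Bool.not_not] at this
  · intro b q hq
    obtain ⟨γ, h1, h2⟩ := hE.var b q hq
    rw [Multiset.mem_singleton] at h1
    exact h1 ▸ h2
  · intro b q hq
    rcases hA.var b q hq with h | ⟨γ, h1, _⟩
    · exact h
    · simp at h1
  · rw [iM_imp_iff, ← hms]; exact hE.prov
  · intro ψ hψ h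
    rw [iM_imp_iff] at h ⊢
    have := hE.min ∅ (by simp [FrS]) ψ (by rwa [Bool.not_not]) (by rwa [hms, Set.union_empty])
    simpa using this
  · rw [iM_imp_iff]
    have := hA.prov
    rw [ms_zero] at this
    simpa using this
  · intro ψ hψ h
    rw [iM_imp_iff] at h ⊢
    exact hA.box hψ h
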